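/- Let M ≥ 3 be an integer and p ∈ [2, ∞) a real number, and let C ≥ 0 be a constant such that for every n ∈ ℕ and every M-linear form T : ℝⁿ × ℝⁿ × ⋯ × ℝⁿ → ℝ one has (∑_{i₁=1}^{n} (∑_{i₂,…,i_M=1}^{n} |T(e_{i₁},…,e_{i_M})|²)^{(1/2)·(p/(p−1))})^{(p−1)/p} ≤ C · ‖T‖, where ‖T‖ := sup{|T(x^{(1)},…,x^{(M)})| : ‖x^{(1)}‖_{ℓ_p} ≤ 1 and ‖x^{(k)}‖_{ℓ_∞} ≤ 1 for k = 2,…,M}. Then C ≥ (A_{p/(p−1)})^{M−1}; that is, the optimal constant in the multilinear mixed (ℓ_{p/(p−1)}, ℓ₂)-Littlewood inequality is exactly (A_{p/(p−1)})^{M−1}. -/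

import Mathlib

open MeasureTheory Real Filter

/-- The `j`-th Rademacher function, `r_j(t) = sgn(sin(2^j π t))`. -/
noncomputable def rademacher (j : ℕ) (t : ℝ) : ℝ :=
  Real.sign (Real.sin ((2 : ℝ) ^ j * Real.pi * t))

/-- `p₀ ∈ (1,2)` is the unique solution of `Γ((p₀+1)/2) = √π / 2`. -/
noncomputable def khintchineP0 : ℝ :=
  sInf {p : ℝ | 1 < p ∧ p < 2 ∧ Real.Gamma ((p + 1) / 2) = Real.sqrt Real.pi / 2}

/-- The optimal constant `A_r` in the Khintchine inequality. -/
noncomputable def khintchineA (r : ℝ) : ℝ :=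
  if r ≤ khintchineP0 then (2 : ℝ) ^ (1 / r - 1 / 2)
  else if r < 2 then
    (1 / Real.sqrt 2) * (Real.Gamma ((r + 1) / 2) / Real.sqrt Real.pi) ^ (-(1 / r))
  else 1

/-- The `ℓ_p` norm of a vector in `ℝⁿ` (for finite `p`). -/
noncomputable def lpNorm (p : ℝ) {n : ℕ} (x : Fin n → ℝ) : ℝ :=
  (∑ i, |x i| ^ p) ^ (1 / p)

/-- The `ℓ_∞` norm of a vector in `ℝⁿ`. -/
noncomputable def linfNorm {n : ℕ} (x : Fin n → ℝ) : ℝ :=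
  ⨆ i, |x i|

/-- The norm of an `(m+1)`-linear form on `ℝᴺ × (ℝⁿ)^m` (encoded as a linear map into
`m`-multilinear maps): `sup{|T(x, y₁, …, y_m)| : ‖x‖_{ℓ_p} ≤ 1, ‖y_k‖_{ℓ_∞} ≤ 1}`. -/
noncomputable def multiOpNorm (p : ℝ) {N n m : ℕ}
    (T : (Fin N → ℝ) →ₗ[ℝ] MultilinearMap ℝ (fun _ : Fin m => (Fin n → ℝ)) ℝ) : ℝ :=
  sSup {c : ℝ | ∃ (x : Fin N → ℝ) (y : Fin m → (Fin n → ℝ)),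
    lpNorm p x ≤ 1 ∧ (∀ k, linfNorm (y k) ≤ 1) ∧ c = |T x y|}


/-!
A sum `∑ i, x i * ∏ k, φ i k (y k)` in which `(φ i 1, …, φ i m)` runs over all `m`-tuples of
functionals `y ↦ ∑ j, ε j * a j * y j`, `ε j = ±1`, has norm controlled by a moment of a Rademacher
sum: apply Hölder's inequality in `x`, and for the `y k` use that `y ↦ 𝔼 |∑ j, ε j * a j * y j| ^ q`
is convex, hence maximal at the vertices of the cube, where all its values agree. For every `i` the
coefficients have `ℓ₂` norm `‖a‖₂ ^ m`, so on such a form the mixed Littlewood inequality with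
constant `C` is the `m`-th power of the Khintchine inequality for `a` with constant `C ^ (1 / m)`.
The vectors `(1)`, `(1, 1)` and `(1, …, 1) / √d`, `d → ∞`, bound this constant below by the three
expressions in the definition of `A_q`. In the last case the central limit theorem identifies the
limiting moment with that of a standard Gaussian.
-/

open ProbabilityTheory Topology
open scoped BigOperators

section RademacherSums

variable {ι : Type*} [Fintype ι] [DecidableEq ι]

/-- The moment `𝔼 |∑ j, ε j * a j| ^ q` of a Rademacher sum: the `ε j` are independent uniform
signs, encoded by averaging over all sign patterns `ε : ι → ℤˣ`. -/
noncomputable def rademacherMoment (q : ℝ) (a : ι → ℝ) : ℝ :=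
  𝔼 ε : ι → ℤˣ, |∑ j, ε j • a j| ^ q

lemma rademacherMoment_nonneg (q : ℝ) (a : ι → ℝ) : 0 ≤ rademacherMoment q a :=
  Finset.expect_nonneg fun _ _ => by positivity

lemma rademacherMoment_smul_signs (q : ℝ) (a : ι → ℝ) (u : ι → ℤˣ) :
    rademacherMoment q (fun j => u j • a j) = rademacherMoment q a :=
  Fintype.expect_equiv (Equiv.mulRight u) _ _ fun ε => by simp [mul_smul]

lemma convexOn_abs_rpow {q : ℝ} (hq : 1 ≤ q) : ConvexOn ℝ Set.univ fun x : ℝ => |x| ^ q := by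
  refine ⟨convex_univ, fun x _ y _ s t hs ht hst => ?_⟩
  calc |s • x + t • y| ^ q
      ≤ (s • |x| + t • |y|) ^ q := by
        gcongr
        exact convexOn_univ_norm.2 (Set.mem_univ x) (Set.mem_univ y) hs ht hst
    _ ≤ s • |x| ^ q + t • |y| ^ q :=
        (convexOn_rpow hq).2 (abs_nonneg x) (abs_nonneg y) hs ht hst

lemma convexOn_rademacherMoment {q : ℝ} (hq : 1 ≤ q) :
    ConvexOn ℝ Set.univ (rademacherMoment q : (ι → ℝ) → ℝ) := by
  refine ⟨convex_univ, fun a _ b _ s t hs ht hst => ?_⟩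
  simp only [rademacherMoment, Finset.smul_expect, ← Finset.expect_add_distrib]
  refine Finset.expect_le_expect fun ε _ => ?_
  have hlin : ∑ j, ε j • (s • a + t • b) j =
      s • ∑ j, ε j • a j + t • ∑ j, ε j • b j := by
    simp [Finset.mul_sum, Finset.sum_add_distrib, mul_smul_comm]
  rw [hlin]
  exact (convexOn_abs_rpow hq).2 (Set.mem_univ _) (Set.mem_univ _) hs ht hst

/-- By convexity in `y`, it suffices to consider the vertices of the cube, at which `y` is a sign
pattern. -/
lemma rademacherMoment_mul_le {q : ℝ} (hq : 1 ≤ q) (a : ι → ℝ) {y : ι → ℝ}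
    (hy : ∀ j, |y j| ≤ 1) : rademacherMoment q (a * y) ≤ rademacherMoment q a := by
  have hmem : y ∈ convexHull ℝ (Set.univ.pi fun _ : ι => ({-1, 1} : Set ℝ)) := by
    rw [convexHull_pi]
    intro j _
    rw [convexHull_pair, segment_eq_Icc (by norm_num)]
    exact abs_le.1 (hy j)
  obtain ⟨z, hz, hyz⟩ :=
    ((convexOn_rademacherMoment hq).comp_linearMap
      (LinearMap.mulLeft ℝ a)).exists_ge_of_mem_convexHull (Set.subset_univ _) hmem
  have hsign (j : ι) : ∃ u : ℤˣ, a j * z j = u • a j := by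
    rcases hz j (Set.mem_univ j) with h | h
    · exact ⟨-1, by simp [h]⟩
    · exact ⟨1, by simp [Set.mem_singleton_iff.1 h]⟩
  choose u hu using hsign
  have hzu : a * z = fun j => u j • a j := funext hu
  calc rademacherMoment q (a * y) ≤ rademacherMoment q (a * z) := hyz
    _ = rademacherMoment q a := by rw [hzu, rademacherMoment_smul_signs]

lemma expect_sum_signs_smul (a : ι → ℝ) : 𝔼 ε : ι → ℤˣ, ∑ j, ε j • a j = 0 := by
  have hneg : 𝔼 ε : ι → ℤˣ, ∑ j, ε j • a j = 𝔼 ε : ι → ℤˣ, -∑ j, ε j • a j :=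
    Fintype.expect_equiv (Equiv.neg _) _ _ fun ε => by simp
  rw [Finset.expect_neg_distrib] at hneg
  linarith

lemma expect_sign_mul_sign {i j : ι} (hij : i ≠ j) (x y : ℝ) :
    𝔼 ε : ι → ℤˣ, ε i • x * ε j • y = 0 := by
  have hflip : 𝔼 ε : ι → ℤˣ, ε i • x * ε j • y = 𝔼 ε : ι → ℤˣ, -(ε i • x * ε j • y) :=
    Fintype.expect_equiv (Equiv.mulLeft (Pi.mulSingle i (-1))) _ _ fun ε => by
      simp [Pi.mulSingle_eq_of_ne hij.symm]
  rw [Finset.expect_neg_distrib] at hflip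
  linarith

lemma expect_sq_sum_signs_smul (a : ι → ℝ) :
    𝔼 ε : ι → ℤˣ, (∑ j, ε j • a j) ^ 2 = ∑ j, a j ^ 2 := by
  simp only [sq, Finset.sum_mul_sum, Finset.expect_sum_comm]
  refine Finset.sum_congr rfl fun i _ => ?_
  rw [Finset.sum_eq_single i (fun j _ hji => expect_sign_mul_sign hji.symm _ _) (by simp)]
  simp [smul_mul_smul_comm]

lemma rademacherMoment_unique [Unique ι] (q : ℝ) (a : ι → ℝ) :
    rademacherMoment q a = |a default| ^ q := by
  have habs (u : ℤˣ) (x : ℝ) : |u • x| = |x| := by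
    rcases Int.units_eq_one_or u with rfl | rfl <;> simp
  simp [rademacherMoment, habs]

lemma rademacherMoment_pair (q x y : ℝ) :
    rademacherMoment q ![x, y] = (|x + y| ^ q + |x - y| ^ q) / 2 := by
  have hflip : |-x + y| = |x - y| := by rw [neg_add_eq_sub, abs_sub_comm]
  have hneg : |-x - y| = |x + y| := by rw [← neg_add', abs_neg]
  calc rademacherMoment q ![x, y]
      = (|x + y| ^ q + |x - y| ^ q + (|x - y| ^ q + |x + y| ^ q)) / 4 := by
        rw [rademacherMoment, Fintype.expect_eq_sum_div_card,
          ← (finTwoArrowEquiv ℤˣ).symm.sum_comp, Fintype.sum_prod_type]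
        simp [hflip, hneg, ← sub_eq_add_neg]
    _ = (|x + y| ^ q + |x - y| ^ q) / 2 := by ring

end RademacherSums

section RademacherLaw

instance {M : Type*} [Monoid M] [MeasurableSpace M] [MeasurableSingletonClass M] :
    MeasurableSingletonClass Mˣ :=
  ⟨fun u => ⟨{(u : M)}, measurableSet_singleton _, by ext; simp [Units.ext_iff]⟩⟩

lemma integral_uniformOfFintype {α E : Type*} [Fintype α] [Nonempty α] [MeasurableSpace α]
    [MeasurableSingletonClass α] [NormedAddCommGroup E] [NormedSpace ℝ E] [CompleteSpace E]
    (g : α → E) :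
    ∫ x, g x ∂(PMF.uniformOfFintype α).toMeasure = (Fintype.card α : ℝ)⁻¹ • ∑ x, g x := by
  simp [PMF.integral_eq_sum, Finset.smul_sum]

variable {ι : Type*} [Fintype ι] [DecidableEq ι]

/-- The law on `ℝ` of the Rademacher sum `∑ j, ε j * a j`. -/
noncomputable def rademacherLaw (a : ι → ℝ) : Measure ℝ :=
  (PMF.uniformOfFintype (ι → ℤˣ)).toMeasure.map fun ε => ∑ j, ε j • a j

instance (a : ι → ℝ) : IsProbabilityMeasure (rademacherLaw a) :=
  Measure.isProbabilityMeasure_map (measurable_of_finite _).aemeasurable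

variable {E : Type*} [NormedAddCommGroup E]

lemma integrable_rademacherLaw (a : ι → ℝ) {g : ℝ → E} (hg : Continuous g) :
    Integrable g (rademacherLaw a) := by
  rw [rademacherLaw, integrable_map_measure hg.aestronglyMeasurable
    (measurable_of_finite _).aemeasurable]
  exact .of_finite

lemma integral_rademacherLaw [NormedSpace ℝ E] [CompleteSpace E] (a : ι → ℝ) {g : ℝ → E}
    (hg : Continuous g) :
    ∫ x, g x ∂rademacherLaw a =
      (Fintype.card (ι → ℤˣ) : ℝ)⁻¹ • ∑ ε : ι → ℤˣ, g (∑ j, ε j • a j) := by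
  rw [rademacherLaw, integral_map (measurable_of_finite _).aemeasurable hg.aestronglyMeasurable,
    integral_uniformOfFintype]

lemma integral_rademacherLaw_real (a : ι → ℝ) {g : ℝ → ℝ} (hg : Continuous g) :
    ∫ x, g x ∂rademacherLaw a = 𝔼 ε : ι → ℤˣ, g (∑ j, ε j • a j) := by
  rw [integral_rademacherLaw a hg, Fintype.expect_eq_sum_div_card, smul_eq_mul, inv_mul_eq_div]

lemma integral_abs_rpow_rademacherLaw {q : ℝ} (hq : 0 ≤ q) (a : ι → ℝ) :
    ∫ x, |x| ^ q ∂rademacherLaw a = rademacherMoment q a :=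
  integral_rademacherLaw_real a (continuous_abs.rpow_const fun _ => .inr hq)

lemma integral_sq_rademacherLaw (a : ι → ℝ) : ∫ x, x ^ 2 ∂rademacherLaw a = ∑ j, a j ^ 2 := by
  rw [integral_rademacherLaw_real a (by fun_prop), expect_sq_sum_signs_smul]

open Complex in
lemma charFun_rademacherLaw (a : ι → ℝ) (t : ℝ) :
    charFun (rademacherLaw a) t = ∏ j, Complex.cos (a j * t) := by
  have hcos (x : ℝ) : Complex.cos (x * t) = (2 : ℂ)⁻¹ * ∑ u : ℤˣ, cexp (t * (u • x : ℝ) * I) := by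
    simp [Complex.cos, div_eq_inv_mul, mul_comm (t : ℂ)]
  rw [charFun_apply_real, integral_rademacherLaw a (by fun_prop)]
  simp only [hcos, Finset.prod_mul_distrib, Fintype.prod_sum, ← Complex.exp_sum]
  simp [Finset.mul_sum, Finset.sum_mul]

lemma tendsto_rademacherLaw_gaussianReal :
    Tendsto (β := ProbabilityMeasure ℝ)
      (fun d : ℕ => ⟨rademacherLaw fun _ : Fin d => (√d)⁻¹, inferInstance⟩) atTop
      (𝓝 ⟨gaussianReal 0 1, inferInstance⟩) := by
  refine ProbabilityMeasure.tendsto_iff_tendsto_charFun.2 fun t => ?_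
  have hclt := tendsto_charFun_inv_sqrt_mul_pow (P := rademacherLaw fun _ : Fin 1 => 1) (X := id)
    aemeasurable_id
    ((integral_rademacherLaw_real _ continuous_id).trans (expect_sum_signs_smul _))
    (by simp [integral_sq_rademacherLaw]) t
  simpa [charFun_rademacherLaw, charFun_gaussianReal, neg_div] using hclt

end RademacherLaw

section MomentConvergence

lemma rpow_le_min_rpow_add {x K q s : ℝ} (hx : 0 ≤ x) (hK : 0 < K) (hqs : q ≤ s) :
    x ^ q ≤ min x K ^ q + K ^ (q - s) * x ^ s := by
  rcases le_total x K with hxK | hKx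
  · rw [min_eq_left hxK]
    exact le_add_of_nonneg_right (by positivity)
  · have hx0 : 0 < x := hK.trans_le hKx
    calc x ^ q = x ^ (q - s) * x ^ s := by rw [← Real.rpow_add hx0, sub_add_cancel]
      _ ≤ K ^ (q - s) * x ^ s :=
        mul_le_mul_of_nonneg_right (Real.rpow_le_rpow_of_nonpos hK hKx (sub_nonpos.2 hqs))
          (by positivity)
      _ ≤ min x K ^ q + K ^ (q - s) * x ^ s := le_add_of_nonneg_left (by positivity)

variable {E : Type*} [NormedAddCommGroup E] [MeasurableSpace E] [OpensMeasurableSpace E]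
  {q s K : ℝ}

lemma integrable_min_norm_rpow (μ : Measure E) [IsFiniteMeasure μ] (hq : 0 ≤ q) (hK : 0 ≤ K) :
    Integrable (fun x => min ‖x‖ K ^ q) μ := by
  refine .of_bound (by fun_prop) (K ^ q) (ae_of_all _ fun x => ?_)
  rw [Real.norm_of_nonneg (by positivity)]
  gcongr
  exact min_le_right _ _

lemma dist_integral_min_norm_rpow_le (μ : Measure E) [IsFiniteMeasure μ] (hq : 0 ≤ q)
    (hqs : q ≤ s) (hK : 0 < K) (hs : Integrable (fun x => ‖x‖ ^ s) μ) :
    dist (∫ x, ‖x‖ ^ q ∂μ) (∫ x, min ‖x‖ K ^ q ∂μ) ≤ K ^ (q - s) * ∫ x, ‖x‖ ^ s ∂μ := by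
  have hmin := integrable_min_norm_rpow μ hq hK.le
  have hadd := hmin.add (hs.const_mul (K ^ (q - s)))
  have hle (x : E) : ‖x‖ ^ q ≤ min ‖x‖ K ^ q + K ^ (q - s) * ‖x‖ ^ s :=
    rpow_le_min_rpow_add (norm_nonneg x) hK hqs
  have hint : Integrable (fun x => ‖x‖ ^ q) μ :=
    hadd.mono' (by fun_prop) (ae_of_all _ fun x => by
      simpa [Real.norm_of_nonneg (Real.rpow_nonneg (norm_nonneg x) q)] using hle x)
  have hlower : ∫ x, min ‖x‖ K ^ q ∂μ ≤ ∫ x, ‖x‖ ^ q ∂μ :=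
    integral_mono hmin hint fun x => by gcongr; exact min_le_left _ _
  have hupper : ∫ x, ‖x‖ ^ q ∂μ ≤ ∫ x, min ‖x‖ K ^ q ∂μ + K ^ (q - s) * ∫ x, ‖x‖ ^ s ∂μ := by
    rw [← integral_const_mul, ← integral_add hmin (hs.const_mul _)]
    exact integral_mono hint hadd hle
  rw [Real.dist_eq, abs_of_nonneg (sub_nonneg.2 hlower)]
  linarith

/-- Truncating at height `K` costs `O(K ^ (q - s))` uniformly in `i`, so the limits `K → ∞` and
along `l` can be interchanged. -/
lemma tendsto_integral_norm_rpow {ι : Type*} {l : Filter ι} {μ : ι → ProbabilityMeasure E}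
    {ν : ProbabilityMeasure E} (hμν : Tendsto μ l (𝓝 ν)) (hq : 0 ≤ q) (hqs : q < s)
    (hμ : ∀ i, Integrable (fun x => ‖x‖ ^ s) (μ i : Measure E)) {B : ℝ}
    (hB : ∀ i, ∫ x, ‖x‖ ^ s ∂(μ i : Measure E) ≤ B)
    (hν : Integrable (fun x => ‖x‖ ^ s) (ν : Measure E)) :
    Tendsto (fun i => ∫ x, ‖x‖ ^ q ∂(μ i : Measure E)) l (𝓝 (∫ x, ‖x‖ ^ q ∂(ν : Measure E))) := by
  have hdecay (c : ℝ) : Tendsto (fun K : ℝ => K ^ (q - s) * c) atTop (𝓝 0) := by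
    simpa using (tendsto_rpow_neg_atTop (sub_pos.2 hqs)).mul_const c
  have huniform : TendstoUniformly (fun K i => ∫ x, min ‖x‖ K ^ q ∂(μ i : Measure E))
      (fun i => ∫ x, ‖x‖ ^ q ∂(μ i : Measure E)) atTop := by
    refine Metric.tendstoUniformly_iff.2 fun δ hδ => ?_
    filter_upwards [(hdecay B).eventually_lt_const hδ, eventually_gt_atTop 0] with K hKδ hK i
    calc dist (∫ x, ‖x‖ ^ q ∂(μ i : Measure E)) (∫ x, min ‖x‖ K ^ q ∂(μ i : Measure E))
        ≤ K ^ (q - s) * ∫ x, ‖x‖ ^ s ∂(μ i : Measure E) :=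
          dist_integral_min_norm_rpow_le _ hq hqs.le hK (hμ i)
      _ ≤ K ^ (q - s) * B := by gcongr; exact hB i
      _ < δ := hKδ
  refine huniform.tendsto_of_eventually_tendsto (L := fun K => ∫ x, min ‖x‖ K ^ q ∂(ν : Measure E))
    ?_ ?_
  · filter_upwards [eventually_gt_atTop 0] with K hK
    let g : BoundedContinuousFunction E ℝ :=
      .ofNormedAddCommGroup (fun x => min ‖x‖ K ^ q)
        ((continuous_norm.min continuous_const).rpow_const fun _ => .inr hq) (K ^ q) fun x => by
          rw [Real.norm_of_nonneg (by positivity)]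
          gcongr
          exact min_le_right _ _
    exact ProbabilityMeasure.tendsto_iff_forall_integral_tendsto.1 hμν g
  · refine tendsto_iff_dist_tendsto_zero.2 (squeeze_zero' (.of_forall fun _ => dist_nonneg) ?_
      (hdecay (∫ x, ‖x‖ ^ s ∂(ν : Measure E))))
    filter_upwards [eventually_gt_atTop 0] with K hK
    rw [dist_comm]
    exact dist_integral_min_norm_rpow_le _ hq hqs.le hK hν

end MomentConvergence

section GaussianLimit

lemma integral_abs_rpow_gaussianReal {q : ℝ} (hq : -1 < q) :
    ∫ x, |x| ^ q ∂gaussianReal 0 1 = 2 ^ (q / 2) * (Real.Gamma ((q + 1) / 2) / √π) := by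
  have hpdf (x : ℝ) : gaussianPDFReal 0 1 x • |x| ^ q =
      (√(2 * π))⁻¹ * (|x| ^ q * Real.exp (-(1 / 2) * |x| ^ (2 : ℝ))) := by
    rw [gaussianPDFReal, Real.rpow_two, sq_abs, smul_eq_mul, NNReal.coe_one,
      show -(x - 0) ^ 2 / (2 * 1) = -(1 / 2) * x ^ 2 by ring]
    ring_nf
  have hpow : (1 / 2 : ℝ) ^ (-(q + 1) / 2) = 2 ^ (q / 2) * √2 := by
    rw [one_div, Real.inv_rpow two_pos.le, ← Real.rpow_neg two_pos.le, Real.sqrt_eq_rpow,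
      ← Real.rpow_add two_pos]
    ring_nf
  rw [integral_gaussianReal_eq_integral_smul one_ne_zero]
  simp only [hpdf]
  rw [integral_const_mul,
    integral_comp_abs (f := fun u : ℝ => u ^ q * Real.exp (-(1 / 2) * u ^ (2 : ℝ))),
    integral_rpow_mul_exp_neg_mul_rpow two_pos hq (by norm_num), hpow,
    Real.sqrt_mul two_pos.le]
  field_simp

lemma tendsto_rademacherMoment_inv_sqrt {q : ℝ} (hq : 0 ≤ q) (hq2 : q < 2) :
    Tendsto (fun d : ℕ => rademacherMoment q fun _ : Fin d => (√d)⁻¹) atTop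
      (𝓝 (2 ^ (q / 2) * (Real.Gamma ((q + 1) / 2) / √π))) := by
  have hmoment := tendsto_integral_norm_rpow tendsto_rademacherLaw_gaussianReal hq hq2 (B := 1)
    (fun d => by
      simpa using integrable_rademacherLaw _ (continuous_pow 2))
    (fun d => by
      simpa [integral_sq_rademacherLaw] using mul_inv_le_one)
    (by simpa using (memLp_id_gaussianReal 2).integrable_sq)
  simpa [integral_abs_rpow_rademacherLaw hq, integral_abs_rpow_gaussianReal (by linarith : -1 < q)]
    using hmoment

end GaussianLimit

section KhintchineConstants

/-- `A` is admissible in the Khintchine inequality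
`(∑ j, a j ^ 2) ^ (1 / 2) ≤ A * (𝔼 |∑ j, ε j * a j| ^ q) ^ (1 / q)`. -/
def IsKhintchineConst (q A : ℝ) : Prop :=
  ∀ (d : ℕ) (a : Fin d → ℝ), √(∑ j, a j ^ 2) ≤ A * rademacherMoment q a ^ (1 / q)

variable {q A : ℝ}

lemma IsKhintchineConst.one_le (h : IsKhintchineConst q A) : 1 ≤ A := by
  simpa [rademacherMoment_unique] using h 1 fun _ => 1

lemma IsKhintchineConst.two_rpow_le (h : IsKhintchineConst q A) (hq : 0 < q) :
    (2 : ℝ) ^ (1 / q - 1 / 2) ≤ A := by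
  have hmoment : rademacherMoment q ![1, 1] ^ (1 / q) = (2 : ℝ) ^ (1 - 1 / q) := by
    rw [rademacherMoment_pair, sub_self, abs_zero, Real.zero_rpow hq.ne', add_zero,
      one_add_one_eq_two, abs_two, ← Real.rpow_sub_one two_ne_zero, ← Real.rpow_mul two_pos.le,
      mul_one_div, sub_div, div_self hq.ne']
  have hpair := h 2 ![1, 1]
  rw [hmoment, ← div_le_iff₀ (by positivity)] at hpair
  calc (2 : ℝ) ^ (1 / q - 1 / 2) = √2 / 2 ^ (1 - 1 / q) := by
        rw [Real.sqrt_eq_rpow, ← Real.rpow_sub two_pos]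
        ring_nf
    _ ≤ A := by simpa [one_add_one_eq_two] using hpair

lemma IsKhintchineConst.gaussian_le (h : IsKhintchineConst q A) (hq : 0 < q) (hq2 : q < 2) :
    1 / √2 * (Real.Gamma ((q + 1) / 2) / √π) ^ (-(1 / q)) ≤ A := by
  set G := Real.Gamma ((q + 1) / 2) / √π
  have hG : 0 < G := div_pos (Real.Gamma_pos_of_pos (by linarith)) (by positivity)
  have hlimit : 1 ≤ A * (2 ^ (q / 2) * G) ^ (1 / q) := by
    refine ge_of_tendsto (((tendsto_rademacherMoment_inv_sqrt hq.le hq2).rpow_const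
      (.inl (by positivity))).const_mul A) ?_
    filter_upwards [eventually_ne_atTop 0] with d hd
    simpa [hd] using h d fun _ => (√d)⁻¹
  have hroot : (2 ^ (q / 2) * G) ^ (1 / q) = √2 * G ^ (1 / q) := by
    rw [Real.mul_rpow (by positivity) hG.le, ← Real.rpow_mul two_pos.le, Real.sqrt_eq_rpow]
    field_simp
  rw [hroot, ← div_le_iff₀ (by positivity)] at hlimit
  calc 1 / √2 * G ^ (-(1 / q)) = 1 / (√2 * G ^ (1 / q)) := by
        rw [Real.rpow_neg hG.le]
        field_simp
    _ ≤ A := hlimit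

lemma IsKhintchineConst.khintchineA_le (h : IsKhintchineConst q A) (hq : 0 < q) :
    khintchineA q ≤ A := by
  unfold khintchineA
  split_ifs with _ hq2
  exacts [h.two_rpow_le hq, h.gaussian_le hq hq2, h.one_le]

lemma khintchineA_nonneg (hq : 0 < q) : 0 ≤ khintchineA q := by
  unfold khintchineA
  split_ifs <;> positivity

end KhintchineConstants

section ProductForms

variable {N n m : ℕ}

lemma abs_le_linfNorm (y : Fin n → ℝ) (j : Fin n) : |y j| ≤ linfNorm y :=
  le_ciSup (f := fun i => |y i|) (Set.finite_range _).bddAbove j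

/-- The `(m + 1)`-linear form `(x, y) ↦ ∑ i, x i * ∏ k, φ i k (y k)`, whose `x`-coefficients are
products of linear functionals. -/
noncomputable def sumProdForm (φ : Fin N → Fin m → (Fin n → ℝ) →ₗ[ℝ] ℝ) :
    (Fin N → ℝ) →ₗ[ℝ] MultilinearMap ℝ (fun _ : Fin m => (Fin n → ℝ)) ℝ :=
  ∑ i, (LinearMap.proj i : (Fin N → ℝ) →ₗ[ℝ] ℝ).smulRight
    ((MultilinearMap.mkPiAlgebra ℝ (Fin m) ℝ).compLinearMap (φ i))

variable (φ : Fin N → Fin m → (Fin n → ℝ) →ₗ[ℝ] ℝ)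

lemma sumProdForm_apply (x : Fin N → ℝ) (y : Fin m → Fin n → ℝ) :
    sumProdForm φ x y = ∑ i, x i * ∏ k, φ i k (y k) := by
  simp [sumProdForm]

lemma sumProdForm_single (i : Fin N) (y : Fin m → Fin n → ℝ) :
    sumProdForm φ (Pi.single i 1) y = ∏ k, φ i k (y k) := by
  simp [sumProdForm_apply, Pi.single_apply]

lemma sum_abs_sumProdForm_single_rpow_two (i : Fin N) :
    ∑ l : Fin m → Fin n,
        |sumProdForm φ (Pi.single i 1) fun k => Pi.single (l k) 1| ^ (2 : ℝ) =
      ∏ k, ∑ j, φ i k (Pi.single j 1) ^ 2 := by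
  simp only [sumProdForm_single, Real.rpow_two, sq_abs, ← Finset.prod_pow, Fintype.prod_sum]

lemma multiOpNorm_sumProdForm_le {p q B : ℝ} (hpq : p.HolderConjugate q) (hB : 0 ≤ B)
    (hφ : ∀ y : Fin m → Fin n → ℝ, (∀ k, linfNorm (y k) ≤ 1) →
      ∑ i, ∏ k, |φ i k (y k)| ^ q ≤ B) :
    multiOpNorm p (sumProdForm φ) ≤ B ^ (1 / q) := by
  refine Real.sSup_le ?_ (by positivity)
  rintro c ⟨x, y, hx, hy, rfl⟩
  have hq := hpq.symm.pos
  have hcoeff : ∑ i, |∏ k, φ i k (y k)| ^ q ≤ B := by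
    simpa only [Finset.abs_prod, Real.finsetProd_rpow _ _ fun _ _ => abs_nonneg _] using hφ y hy
  calc |sumProdForm φ x y| = |∑ i, x i * ∏ k, φ i k (y k)| := by rw [sumProdForm_apply]
    _ ≤ ∑ i, |x i| * |∏ k, φ i k (y k)| := by
        simpa only [abs_mul] using Finset.abs_sum_le_sum_abs
          (fun i => x i * ∏ k, φ i k (y k)) Finset.univ
    _ ≤ _root_.lpNorm p x * (∑ i, |∏ k, φ i k (y k)| ^ q) ^ (1 / q) := by
        simpa only [abs_abs, _root_.lpNorm] using Real.inner_le_Lp_mul_Lq Finset.univ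
          (fun i => |x i|) (fun i => |∏ k, φ i k (y k)|) hpq
    _ ≤ 1 * B ^ (1 / q) := by gcongr
    _ = B ^ (1 / q) := one_mul _

end ProductForms

section RademacherForms

variable {ι : Type*} [Fintype ι] {n : ℕ}

/-- The linear functional `y ↦ ∑ j, ε j * a j * y (f j)`: a Rademacher sum supported on the
coordinates selected by `f`. -/
noncomputable def rademacherFunctional (f : ι ↪ Fin n) (a : ι → ℝ) (ε : ι → ℤˣ) :
    (Fin n → ℝ) →ₗ[ℝ] ℝ :=
  ∑ j, (ε j • a j) • LinearMap.proj (f j)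

lemma rademacherFunctional_apply (f : ι ↪ Fin n) (a : ι → ℝ) (ε : ι → ℤˣ) (y : Fin n → ℝ) :
    rademacherFunctional f a ε y = ∑ j, ε j • (a j * y (f j)) := by
  simp [rademacherFunctional]

lemma sum_sq_rademacherFunctional_single (f : ι ↪ Fin n) (a : ι → ℝ) (ε : ι → ℤˣ) :
    ∑ l, rademacherFunctional f a ε (Pi.single l 1) ^ 2 = ∑ j, a j ^ 2 := by
  have hoff : ∀ l ∉ Set.range f, rademacherFunctional f a ε (Pi.single l 1) ^ 2 = 0 := by
    intro l hl
    rw [rademacherFunctional_apply, Finset.sum_eq_zero, zero_pow two_ne_zero]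
    exact fun j _ => by simp [Pi.single_eq_of_ne fun h => hl ⟨j, h⟩]
  rw [← Fintype.sum_of_injective f f.injective (fun j => a j ^ 2) _ hoff]
  intro j
  classical
  have hsq (u : ℤˣ) (x : ℝ) : (u • x) ^ 2 = x ^ 2 := by
    rcases Int.units_eq_one_or u with rfl | rfl <;> simp
  simp [rademacherFunctional_apply, Pi.single_apply, hsq]

variable [DecidableEq ι]

lemma sum_abs_rademacherFunctional_rpow_le {q : ℝ} (hq : 1 ≤ q) (f : ι ↪ Fin n) (a : ι → ℝ)
    {y : Fin n → ℝ} (hy : linfNorm y ≤ 1) :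
    ∑ ε, |rademacherFunctional f a ε y| ^ q ≤
      Fintype.card (ι → ℤˣ) * rademacherMoment q a := by
  calc ∑ ε, |rademacherFunctional f a ε y| ^ q
      = Fintype.card (ι → ℤˣ) * rademacherMoment q (a * (y ∘ f)) := by
        rw [rademacherMoment, ← Finset.card_univ, Finset.card_mul_expect]
        simp only [rademacherFunctional_apply, Pi.mul_apply, Function.comp_apply]
    _ ≤ Fintype.card (ι → ℤˣ) * rademacherMoment q a := by
        gcongr
        exact rademacherMoment_mul_le hq a fun j => (abs_le_linfNorm y (f j)).trans hy

variable {N m : ℕ}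

lemma multiOpNorm_sumProdForm_rademacherFunctional_le {p q : ℝ} (hpq : p.HolderConjugate q)
    (e : Fin N ≃ (Fin m → ι → ℤˣ)) (f : ι ↪ Fin n) (a : ι → ℝ) :
    multiOpNorm p (sumProdForm fun i k => rademacherFunctional f a (e i k)) ≤
      ((Fintype.card (ι → ℤˣ) * rademacherMoment q a) ^ m) ^ (1 / q) := by
  have hmoment := rademacherMoment_nonneg q a
  refine multiOpNorm_sumProdForm_le _ hpq (by positivity) fun y hy => ?_
  calc ∑ i, ∏ k, |rademacherFunctional f a (e i k) (y k)| ^ q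
      = ∏ k, ∑ ε, |rademacherFunctional f a ε (y k)| ^ q := by
        rw [e.sum_comp fun ε => ∏ k, |rademacherFunctional f a (ε k) (y k)| ^ q,
          Fintype.prod_sum]
    _ ≤ ∏ _k : Fin m, Fintype.card (ι → ℤˣ) * rademacherMoment q a :=
        Finset.prod_le_prod (fun k _ => by positivity) fun k _ =>
          sum_abs_rademacherFunctional_rpow_le hpq.symm.lt.le f a (hy k)
    _ = (Fintype.card (ι → ℤˣ) * rademacherMoment q a) ^ m := Fin.prod_const m _

end RademacherForms

section MixedLittlewoodConstants

/-- `C` is admissible in the mixed `(ℓ_{p/(p-1)}, ℓ₂)`-Littlewood inequality for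
`(m + 1)`-linear forms. -/
def IsMixedLittlewoodConst (m : ℕ) (p C : ℝ) : Prop :=
  0 ≤ C ∧ ∀ (n : ℕ)
    (T : (Fin n → ℝ) →ₗ[ℝ] MultilinearMap ℝ (fun _ : Fin m => (Fin n → ℝ)) ℝ),
    (∑ i₁ : Fin n, (∑ i : Fin m → Fin n,
      |T (Pi.single i₁ 1) (fun k => Pi.single (i k) 1)| ^ (2 : ℝ))
        ^ ((1 / 2) * (p / (p - 1)))) ^ ((p - 1) / p) ≤ C * multiOpNorm p T

variable {m : ℕ} {p C : ℝ}

lemma IsMixedLittlewoodConst.sqrt_pow_le (h : IsMixedLittlewoodConst m p C) (hp : 1 < p)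
    {ι : Type*} [Fintype ι] [DecidableEq ι] (g : ι ↪ (Fin m → ι → ℤˣ)) (a : ι → ℝ) :
    √(∑ j, a j ^ 2) ^ m ≤ C * (rademacherMoment (p / (p - 1)) a ^ (1 / (p / (p - 1)))) ^ m := by
  have hpq : p.HolderConjugate (p / (p - 1)) := .conjExponent hp
  obtain ⟨hC, hT⟩ := h
  rw [← one_div_div p (p - 1)] at hT
  generalize p / (p - 1) = q at *
  have hq := hpq.symm.pos
  have hmoment := rademacherMoment_nonneg q a
  let e := (Fintype.equivFin (Fin m → ι → ℤˣ)).symm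
  set K := (Fintype.card (ι → ℤˣ) : ℝ) with hK
  have hKpos : 0 < K := by rw [hK]; exact_mod_cast Fintype.card_pos
  have hcoeff : ((Fintype.card (Fin m → ι → ℤˣ) : ℝ) *
      ((∑ j, a j ^ 2) ^ m) ^ (1 / 2 * q)) ^ (1 / q) = (K ^ (1 / q)) ^ m * √(∑ j, a j ^ 2) ^ m := by
    rw [Fintype.card_pi_const, Nat.cast_pow, ← hK, Real.mul_rpow (by positivity) (by positivity),
      ← Real.rpow_mul (by positivity), mul_assoc, mul_one_div_cancel hq.ne', mul_one,
      ← Real.rpow_pow_comm hKpos.le, ← Real.rpow_pow_comm (by positivity), Real.sqrt_eq_rpow]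
  have htest := (hT _ (sumProdForm fun i k =>
    rademacherFunctional (g.trans e.symm.toEmbedding) a (e i k))).trans
    (mul_le_mul_of_nonneg_left (multiOpNorm_sumProdForm_rademacherFunctional_le hpq e _ a) hC)
  simp only [sum_abs_sumProdForm_single_rpow_two, sum_sq_rademacherFunctional_single,
    Fin.prod_const, Fin.sum_const, nsmul_eq_mul] at htest
  rw [hcoeff, ← Real.rpow_pow_comm (by positivity), Real.mul_rpow hKpos.le hmoment, mul_pow,
    mul_left_comm] at htest
  exact le_of_mul_le_mul_left htest (by positivity)

lemma IsMixedLittlewoodConst.one_le (h : IsMixedLittlewoodConst 0 p C) (hp : 1 < p) : 1 ≤ C := by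
  simpa using h.sqrt_pow_le hp (.ofIsEmpty : Fin 0 ↪ _) 0

lemma IsMixedLittlewoodConst.isKhintchineConst (h : IsMixedLittlewoodConst m p C) (hp : 1 < p)
    (hm : m ≠ 0) : IsKhintchineConst (p / (p - 1)) (C ^ (m⁻¹ : ℝ)) := by
  intro d a
  have hcard : Fintype.card (Fin d) ≤ Fintype.card (Fin m → Fin d → ℤˣ) := by
    simpa using Nat.lt_two_pow_self.le.trans (Nat.le_self_pow hm (2 ^ d))
  obtain ⟨g⟩ := Function.Embedding.nonempty_of_card_le hcard
  have hmoment := rademacherMoment_nonneg (p / (p - 1)) a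
  have hC := h.1
  refine le_of_pow_le_pow_left₀ hm (by positivity) ?_
  rw [mul_pow, Real.rpow_inv_natCast_pow hC hm]
  exact h.sqrt_pow_le hp g a

end MixedLittlewoodConstants

theorem multilinear_mixed_littlewood_optimal_general {m : ℕ} {p C : ℝ} (hp : 1 < p)
    (h : IsMixedLittlewoodConst m p C) : khintchineA (p / (p - 1)) ^ m ≤ C := by
  rcases eq_or_ne m 0 with rfl | hm
  · simpa using h.one_le hp
  have hq : 0 < p / (p - 1) := div_pos (by linarith) (by linarith)
  calc khintchineA (p / (p - 1)) ^ m ≤ (C ^ (m⁻¹ : ℝ)) ^ m :=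
        pow_le_pow_left₀ (khintchineA_nonneg hq) ((h.isKhintchineConst hp hm).khintchineA_le hq) m
    _ = C := Real.rpow_inv_natCast_pow h.1 hm

/-- Optimality: any constant in the multilinear mixed `(ℓ_{p/(p-1)}, ℓ₂)`-Littlewood
inequality for `M`-linear forms (`M = m + 1 ≥ 3`) is at least `(A_{p/(p-1)})^{M-1}`. -/
theorem multilinear_mixed_littlewood_optimal (m : ℕ) (hm : 2 ≤ m) (p : ℝ) (hp : 2 ≤ p)
    (C : ℝ) (hC : 0 ≤ C)
    (h : ∀ (n : ℕ)
        (T : (Fin n → ℝ) →ₗ[ℝ] MultilinearMap ℝ (fun _ : Fin m => (Fin n → ℝ)) ℝ),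
      (∑ i₁ : Fin n, (∑ i : Fin m → Fin n,
          |T (Pi.single i₁ 1) (fun k => Pi.single (i k) 1)| ^ (2 : ℝ))
            ^ ((1 / 2) * (p / (p - 1)))) ^ ((p - 1) / p)
        ≤ C * multiOpNorm p T) :
    khintchineA (p / (p - 1)) ^ m ≤ C :=
  multilinear_mixed_littlewood_optimal_general (by linarith) ⟨hC, h⟩
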